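/- Let F : ℝ² → ℝ² be a lift of a homeomorphism f of the two-torus homotopic to the identity, and let U ⊆ T² be open, bounded, connected and recurrent. If S ⊆ ℝ² is a line segment of positive length whose affine span contains no rational vectors and ρ_U(F) = S, then ρ(F) = S; moreover the sets φ_n(U) = {(F^n(z) − z)/n : z ∈ π⁻¹(U)} converge to S in Hausdorff distance as n → ∞. -/

import Mathlib

noncomputable section
open Filter Topology Metric Set MeasureTheory

/-- Euclidean space `ℝ^d`. -/
abbrev E (d : ℕ) := EuclideanSpace ℝ (Fin d)

/-- The integer lattice `ℤ^d` as an additive subgroup of `ℝ^d`. -/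
def ZLat (d : ℕ) : AddSubgroup (E d) where
  carrier := {z | ∀ i, ∃ m : ℤ, z i = (m : ℝ)}
  zero_mem' := fun i => ⟨0, by simp⟩
  add_mem' := by
    intro x y hx hy i
    obtain ⟨m, hm⟩ := hx i
    obtain ⟨n, hn⟩ := hy i
    exact ⟨m + n, by simp [PiLp.add_apply, hm, hn]⟩
  neg_mem' := by
    intro x hx i
    obtain ⟨m, hm⟩ := hx i
    exact ⟨-m, by simp [PiLp.neg_apply, hm]⟩

/-- The torus `T^d = ℝ^d / ℤ^d`. -/
abbrev T (d : ℕ) := E d ⧸ ZLat d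

/-- The canonical projection `π : ℝ^d → T^d`. -/
def tpi (d : ℕ) : E d → T d := QuotientAddGroup.mk

/-- The set of rotation vectors of orbit segments starting in `W ⊆ ℝ^d`:
`{ρ | ∃ nᵢ → ∞, zᵢ ∈ W, (F^{nᵢ}(zᵢ) - zᵢ)/nᵢ → ρ}`. -/
def rotRel {d : ℕ} (F : E d → E d) (W : Set (E d)) : Set (E d) :=
  {ρ | ∃ (n : ℕ → ℕ) (z : ℕ → E d),
    Tendsto n atTop atTop ∧ (∀ i, z i ∈ W) ∧
    Tendsto (fun i => (n i : ℝ)⁻¹ • (F^[n i] (z i) - z i)) atTop (𝓝 ρ)}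

/-- The Misiurewicz–Ziemian rotation set `ρ(F)` of a lift `F`. -/
def rotSet {d : ℕ} (F : E d → E d) : Set (E d) := rotRel F Set.univ

/-- The rotation subset `ρ_U(F)` for `U ⊆ T^d` (starting points in `π⁻¹(U)`). -/
def rotU {d : ℕ} (F : E d → E d) (U : Set (T d)) : Set (E d) :=
  rotRel F (tpi d ⁻¹' U)

/-- `F` is a lift of the torus homeomorphism `f` (which is then homotopic to the
identity, as expressed by commutation with the deck translations). -/
def IsLift {d : ℕ} (F : E d ≃ₜ E d) (f : T d ≃ₜ T d) : Prop :=
  (∀ z : E d, tpi d (F z) = f (tpi d z)) ∧ ∀ z : E d, ∀ m ∈ ZLat d, F (z + m) = F z + m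

/-- `U ⊆ T^d` is bounded: the connected components of `π⁻¹(U)` are bounded. -/
def BoundedSet {d : ℕ} (U : Set (T d)) : Prop :=
  ∀ z ∈ tpi d ⁻¹' U, Bornology.IsBounded (connectedComponentIn (tpi d ⁻¹' U) z)

/-- `U ⊆ T^d` is recurrent: `f^n(U) ∩ U ≠ ∅` for infinitely many `n ≥ 1`. -/
def Recurrent {d : ℕ} (f : T d ≃ₜ T d) (U : Set (T d)) : Prop :=
  {n : ℕ | 1 ≤ n ∧ ((⇑f)^[n] '' U ∩ U).Nonempty}.Infinite

/-- The Euclidean scalar product `⟨z, v⟩` in `ℝ²`. -/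
def sdot (v z : E 2) : ℝ := z 0 * v 0 + z 1 * v 1

/-- `⟨z, v^⊥⟩` where `v^⊥ = (-v₂, v₁)`. -/
def pdot (v z : E 2) : ℝ := z 1 * v 0 - z 0 * v 1

/-- The affine line `L_{λ,v} = λv + {v}^⊥ = {z | ⟨z,v⟩ = λ⟨v,v⟩}`. -/
def lineL (lam : ℝ) (v : E 2) : Set (E 2) := {z | sdot v z = lam * sdot v v}

/-- A vector of `ℝ²` is rational if both coordinates are rational. -/
def RatVec (z : E 2) : Prop := (∃ q : ℚ, z 0 = (q : ℝ)) ∧ ∃ q : ℚ, z 1 = (q : ℝ)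

/-!
Let `W = π⁻¹(U)` and let `O` be the union of its forward iterates. Two returns of `U` to itself with
non-parallel space-time displacements `(n, m)` join a point of `O` to a nontrivial integer translate
of itself inside `O`. Such displacements exist because otherwise `m / n` would be a rational point
of `S`, and the component of `O` obtained is also unbounded in the orthogonal direction, because
otherwise the affine span of `S` would be the rational line through `m / n`. By periodicity `O` then
contains a compact fence `K` around a fundamental domain. The bounded region enclosed by `Fⁿ(K)`
lies in every closed convex set containing `Fⁿ(K)`, and `K` is covered by finitely many iterates of
`W`, so the displacement `Fⁿ(x) - x` of every point is at bounded distance from the convex hull of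
the displacements of points of `W`. Dividing by `n` gives `ρ(F) ⊆ S`, and shows that the connected
sets `φ_n(U)`, which accumulate on the segment `S` only, also come close to both of its ends.
-/

section Crossing

open scoped unitInterval

lemma lt_of_sin_add_ne_zero {X : Type*} [TopologicalSpace X] [PreconnectedSpace X] {f : X → ℝ}
    (hf : Continuous f) (c : ℝ) (hsin : ∀ x, Real.sin (f x + c) ≠ 0) {x y : X}
    (hxy : 0 < Real.sin (f y - f x)) : f x < f y := by
  by_contra! hyx
  have hgap : f y + Real.pi < f x := by
    by_contra! hle
    exact hxy.not_ge (Real.sin_nonpos_of_nonpos_of_neg_pi_le (by linarith) (by linarith))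
  obtain ⟨k, ⟨hk₁, hk₂⟩, -⟩ := existsUnique_add_zsmul_mem_Ico Real.pi_pos 0 (f y + c)
  obtain ⟨t, ht⟩ := mem_range_of_exists_le_of_exists_ge
    (hf.add_const c) ⟨y, hk₁⟩ ⟨x, by linarith⟩
  exact hsin t (by simp [ht])

lemma exists_continuous_polar {X : Type*} [TopologicalSpace X] [SimplyConnectedSpace X]
    [LocallyPathConnectedSpace X] {g h : X → ℝ} (hg : Continuous g) (hh : Continuous h)
    (hne : ∀ x, g x = 0 → h x ≠ 0) :
    ∃ r θ : X → ℝ, Continuous θ ∧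
      ∀ x, 0 < r x ∧ g x = r x * Real.cos (θ x) ∧ h x = r x * Real.sin (θ x) := by
  let d : X → ℂ := fun x => g x + h x * Complex.I
  have hre (x) : (d x).re = g x := by simp [d]
  have him (x) : (d x).im = h x := by simp [d]
  have hd (x) : d x ≠ 0 := fun h0 =>
    hne x (by rw [← hre, h0, Complex.zero_re]) (by rw [← him, h0, Complex.zero_im])
  obtain ⟨x₀⟩ : Nonempty X := inferInstance
  obtain ⟨L, ⟨-, hL⟩, -⟩ := Complex.isCoveringMap_exp.existsUnique_continuousMap_lifts
    (⟨fun x => ⟨d x, hd x⟩, by fun_prop⟩ : C(X, {z : ℂ // z ≠ 0})) x₀ (Complex.log (d x₀))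
    (Subtype.ext (Complex.exp_log (hd x₀)))
  have hexp (x) : Complex.exp (L x) = d x := congrArg Subtype.val (congrFun hL x)
  refine ⟨fun x => Real.exp (L x).re, fun x => (L x).im, by fun_prop, fun x =>
    ⟨Real.exp_pos _, ?_, ?_⟩⟩
  · rw [← hre, ← hexp, Complex.exp_re]
  · rw [← him, ← hexp, Complex.exp_im]

-- The angle would increase along each of the four edges of the square.
lemma not_exists_angle_on_square {θ : I × I → ℝ} (hθ : Continuous θ)
    (hcosl : ∀ t, Real.cos (θ (0, t)) < 0) (hcosr : ∀ t, 0 < Real.cos (θ (1, t)))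
    (hsinb : ∀ s, Real.sin (θ (s, 0)) < 0) (hsint : ∀ s, 0 < Real.sin (θ (s, 1))) : False := by
  have hbottom : θ (0, 0) < θ (1, 0) := by
    refine lt_of_sin_add_ne_zero (f := fun s => θ (s, 0)) (by fun_prop) 0
      (fun s => by simpa using (hsinb s).ne) ?_
    rw [Real.sin_sub]
    linarith [mul_pos_of_neg_of_neg (hsinb 1) (hcosl 0), mul_neg_of_pos_of_neg (hcosr 0) (hsinb 0)]
  have hright : θ (1, 0) < θ (1, 1) := by
    refine lt_of_sin_add_ne_zero (f := fun t => θ (1, t)) (by fun_prop) (Real.pi / 2)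
      (fun t => by simpa [Real.sin_add_pi_div_two] using (hcosr t).ne') ?_
    rw [Real.sin_sub]
    linarith [mul_pos (hsint 1) (hcosr 0), mul_neg_of_pos_of_neg (hcosr 1) (hsinb 1)]
  have htop : θ (1, 1) < θ (0, 1) := by
    refine lt_of_sin_add_ne_zero (f := fun s => θ (s, 1)) (by fun_prop) 0
      (fun s => by simpa using (hsint s).ne') ?_
    rw [Real.sin_sub]
    linarith [mul_pos (hsint 0) (hcosr 1), mul_neg_of_neg_of_pos (hcosl 1) (hsint 1)]
  have hleft : θ (0, 1) < θ (0, 0) := by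
    refine lt_of_sin_add_ne_zero (f := fun t => θ (0, t)) (by fun_prop) (Real.pi / 2)
      (fun t => by simpa [Real.sin_add_pi_div_two] using (hcosl t).ne) ?_
    rw [Real.sin_sub]
    linarith [mul_pos_of_neg_of_neg (hsinb 0) (hcosl 1),
      mul_neg_of_neg_of_pos (hcosl 0) (hsint 0)]
  exact (hbottom.trans (hright.trans (htop.trans hleft))).false

theorem poincare_miranda {g h : I × I → ℝ} (hg : Continuous g) (hh : Continuous h)
    (hleft : ∀ t, g (0, t) < 0) (hright : ∀ t, 0 < g (1, t))
    (hbot : ∀ s, h (s, 0) < 0) (htop : ∀ s, 0 < h (s, 1)) :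
    ∃ x, g x = 0 ∧ h x = 0 := by
  by_contra! hne
  let proj : ℝ × ℝ → I × I := Prod.map (projIcc 0 1 zero_le_one) (projIcc 0 1 zero_le_one)
  have hproj : Continuous proj := continuous_projIcc.prodMap continuous_projIcc
  obtain ⟨r, θ', hθ', hpolar'⟩ := exists_continuous_polar (hg.comp hproj) (hh.comp hproj)
    fun x => hne (proj x)
  let θ : I × I → ℝ := fun x => θ' (x.1, x.2)
  have hθ : Continuous θ := by fun_prop
  have hpolar (x : I × I) : ∃ r, 0 < r ∧ g x = r * Real.cos (θ x) ∧ h x = r * Real.sin (θ x) :=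
    ⟨r (x.1, x.2), by simpa [proj] using hpolar' (x.1, x.2)⟩
  refine not_exists_angle_on_square hθ (fun t => ?_) (fun t => ?_) (fun s => ?_) fun s => ?_
  · obtain ⟨r, hr, hx, -⟩ := hpolar (0, t)
    exact neg_of_mul_neg_right (hx ▸ hleft t) hr.le
  · obtain ⟨r, hr, hx, -⟩ := hpolar (1, t)
    exact (mul_pos_iff_of_pos_left hr).1 (hx ▸ hright t)
  · obtain ⟨r, hr, -, hx⟩ := hpolar (s, 0)
    exact neg_of_mul_neg_right (hx ▸ hbot s) hr.le
  · obtain ⟨r, hr, -, hx⟩ := hpolar (s, 1)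
    exact (mul_pos_iff_of_pos_left hr).1 (hx ▸ htop s)

lemma inter_nonempty_of_joinedIn {X : Type*} [TopologicalSpace X] {φ ψ : X → ℝ}
    (hφ : Continuous φ) (hψ : Continuous ψ) (hinj : Function.Injective fun x => (φ x, ψ x))
    {P Q : Set X} {a a' b b' : X} (hP : JoinedIn P a a') (hQ : JoinedIn Q b b')
    (hφQ : ∀ z ∈ Q, φ a < φ z ∧ φ z < φ a') (hψP : ∀ z ∈ P, ψ b < ψ z ∧ ψ z < ψ b') :
    (P ∩ Q).Nonempty := by
  let α := hP.somePath
  let β := hQ.somePath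
  obtain ⟨⟨s, t⟩, hφst, hψst⟩ := poincare_miranda
    (g := fun x : I × I => φ (α x.1) - φ (β x.2)) (h := fun x : I × I => ψ (β x.2) - ψ (α x.1))
    (by fun_prop) (by fun_prop)
    (fun t => by simpa using (hφQ _ (hQ.somePath_mem t)).1)
    (fun t => by simpa using (hφQ _ (hQ.somePath_mem t)).2)
    (fun s => by simpa using (hψP _ (hP.somePath_mem s)).1)
    (fun s => by simpa using (hψP _ (hP.somePath_mem s)).2)
  have hst : α s = β t := hinj (Prod.ext (sub_eq_zero.1 hφst) (sub_eq_zero.1 hψst).symm)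
  exact ⟨α s, hP.somePath_mem s, hst ▸ hQ.somePath_mem t⟩

end Crossing

section Filling

variable {V : Type*} [NormedAddCommGroup V]

/-- The union of `K` with the bounded path components of its complement (for `x ∈ K`, the path
component of `x` in `Kᶜ` is empty). -/
def filling (K : Set V) : Set V := {x | Bornology.IsBounded (pathComponentIn Kᶜ x)}

lemma image_filling_subset [ProperSpace V] (G : V ≃ₜ V) (K : Set V) :
    G '' filling K ⊆ filling (G '' K) := by
  rintro _ ⟨x, hx, rfl⟩
  have hsub : pathComponentIn (G '' K)ᶜ (G x) ⊆ G '' closure (pathComponentIn Kᶜ x) := by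
    intro y hy
    have hjoin : JoinedIn (G.symm '' (G '' K)ᶜ) (G.symm (G x)) (G.symm y) :=
      hy.map G.symm.continuous
    rw [← image_compl_eq G.bijective, ← image_comp, G.symm_comp_self, image_id,
      G.symm_apply_apply] at hjoin
    exact ⟨G.symm y, subset_closure hjoin, G.apply_symm_apply y⟩
  exact (hx.isCompact_closure.image G.continuous).isBounded.subset hsub

variable [NormedSpace ℝ V]

lemma exists_mem_ray_norm_gt (x : V) {v : V} (hv : v ≠ 0) (R : ℝ) :
    ∃ t : ℝ, 0 ≤ t ∧ R < ‖x + t • v‖ := by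
  have hv' := norm_pos_iff.2 hv
  refine ⟨(|R| + ‖x‖ + 1) / ‖v‖, by positivity, ?_⟩
  have hnorm : ‖((|R| + ‖x‖ + 1) / ‖v‖) • v‖ = |R| + ‖x‖ + 1 := by
    rw [norm_smul, Real.norm_of_nonneg (by positivity), div_mul_cancel₀ _ hv'.ne']
  have := norm_sub_le_norm_add (((|R| + ‖x‖ + 1) / ‖v‖) • v) x
  rw [add_comm x]
  linarith [le_abs_self R]

lemma filling_subset_of_convex [Nontrivial V] {K A : Set V} (hKA : K ⊆ A) (hA : Convex ℝ A)
    (hAc : IsClosed A) : filling K ⊆ A := by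
  intro x hx
  by_contra hxA
  obtain ⟨f, u, hfA, hfx⟩ := geometric_hahn_banach_closed_point hA hAc hxA
  obtain ⟨v, hv, hfv⟩ : ∃ v : V, v ≠ 0 ∧ 0 ≤ f v := by
    obtain ⟨v, hv⟩ := exists_ne (0 : V)
    rcases le_total 0 (f v) with h | h
    · exact ⟨v, hv, h⟩
    · exact ⟨-v, neg_ne_zero.2 hv, by simpa using h⟩
  obtain ⟨R, hR⟩ := hx.exists_norm_le
  obtain ⟨t, ht, hRt⟩ := exists_mem_ray_norm_gt x hv R
  refine hRt.not_ge (hR _ (JoinedIn.of_segment_subset ?_))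
  rw [segment_eq_image']
  rintro _ ⟨s, hs, rfl⟩ hmem
  have hf : f (x + s • (x + t • v - x)) = f x + s * t * f v := by simp [mul_assoc]
  have := hfA _ (hKA hmem)
  have := mul_nonneg (mul_nonneg hs.1 ht) hfv
  linarith

end Filling

section JoinedIn

open scoped unitInterval

lemma exists_joinedIn_first_hit {X : Type*} [TopologicalSpace X] {P : Set X} {x y : X}
    (h : JoinedIn P x y) {N : X → ℝ} (hN : Continuous N) {r : ℝ} (hx : N x ≤ r) (hy : r ≤ N y) :
    ∃ y', N y' = r ∧ JoinedIn (P ∩ {z | N z ≤ r}) x y' := by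
  let γ := h.somePath
  have hNγ : Continuous fun t => N (γ t) := hN.comp γ.continuous
  have hhit : {t : I | N (γ t) = r}.Nonempty :=
    mem_range_of_exists_le_of_exists_ge hNγ ⟨0, by simpa using hx⟩ ⟨1, by simpa using hy⟩
  obtain ⟨t₀, ht₀, hfirst⟩ :=
    (isClosed_singleton.preimage hNγ).isCompact.exists_isLeast hhit
  have hbefore : ∀ s ∈ Icc 0 t₀, N (γ s) ≤ r := by
    intro s hs
    by_contra! hlt
    obtain ⟨t, ht, htr⟩ := intermediate_value_Icc hs.1 hNγ.continuousOn
      ⟨by simpa using hx, hlt.le⟩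
    rw [le_antisymm ht.2 (hs.2.trans (hfirst htr))] at htr
    exact hlt.ne' htr
  refine ⟨γ t₀, ht₀, (γ.subpath 0 t₀).cast γ.source.symm rfl, fun s => ?_⟩
  obtain ⟨s', hs', hs'eq⟩ : γ.subpath 0 t₀ s ∈ γ '' Icc 0 t₀ :=
    Path.range_subpath_of_le γ 0 t₀ t₀.2.1 ▸ mem_range_self s
  change γ.subpath 0 t₀ s ∈ _
  rw [← hs'eq]
  exact ⟨h.somePath_mem s', hbefore s' hs'⟩

lemma exists_compact_joinedIn {X : Type*} [TopologicalSpace X] {P : Set X} {x y : X}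
    (h : JoinedIn P x y) : ∃ K, IsCompact K ∧ K ⊆ P ∧ JoinedIn K x y :=
  ⟨range h.somePath, isCompact_range h.somePath.continuous, range_subset_iff.2 h.somePath_mem,
    h.somePath, mem_range_self⟩

lemma exists_bound_joinedIn {X : Type*} [TopologicalSpace X] {P : Set X} {x y : X}
    (h : JoinedIn P x y) {ψ : X → ℝ} (hψ : Continuous ψ) :
    ∃ B, JoinedIn (P ∩ {z | |ψ z| ≤ B}) x y := by
  obtain ⟨K, hK, hKP, hjoin⟩ := exists_compact_joinedIn h
  obtain ⟨B, hB⟩ := hK.exists_bound_of_continuousOn hψ.continuousOn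
  exact ⟨B, hjoin.mono fun z hz => ⟨hKP hz, hB z hz⟩⟩

lemma joinedIn_add_right {G : Type*} [TopologicalSpace G] [AddGroup G] [ContinuousAdd G]
    {P : Set G} {x y m : G} (h : JoinedIn P x y) (hP : ∀ z ∈ P, z + m ∈ P) :
    JoinedIn P (x + m) (y + m) :=
  (h.map (continuous_add_const m)).mono (image_subset_iff.2 hP)

lemma joinedIn_add_nsmul {G : Type*} [TopologicalSpace G] [AddCommGroup G] [ContinuousAdd G]
    {P : Set G} {x m : G} (h : JoinedIn P x (x + m)) (hP : ∀ z ∈ P, z + m ∈ P) (n : ℕ) :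
    JoinedIn P x (x + n • m) := by
  induction n with
  | zero => simpa using JoinedIn.refl h.source_mem
  | succ n ih =>
    rw [succ_nsmul', ← add_assoc, add_right_comm]
    exact h.trans (joinedIn_add_right ih hP)

end JoinedIn

section Enclosure

variable {V : Type*} [NormedAddCommGroup V] [NormedSpace ℝ V] {φ ψ : V →L[ℝ] ℝ}

/-- `K` contains a path which crosses the strip `|φ| ≤ A` from left to right and on which
`r < ψ < B`; it separates `{ψ ≤ r}` from `{B ≤ ψ}` within the strip. -/
def Blocks (K : Set V) (φ ψ : V →L[ℝ] ℝ) (A r B : ℝ) : Prop :=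
  ∃ a a', φ a < -A ∧ A < φ a' ∧ JoinedIn (K ∩ {z | r < ψ z ∧ ψ z < B}) a a'

lemma Blocks.mono {K L : Set V} {A r B : ℝ} (h : Blocks K φ ψ A r B) (hKL : K ⊆ L) :
    Blocks L φ ψ A r B := by
  obtain ⟨a, a', ha, ha', hjoin⟩ := h
  exact ⟨a, a', ha, ha', hjoin.mono (inter_subset_inter_left _ hKL)⟩

lemma Blocks.not_joinedIn {K : Set V} {A r B : ℝ} (h : Blocks K φ ψ A r B)
    (hinj : Function.Injective fun z => (φ z, ψ z)) {x y : V} (hx : ψ x ≤ r) (hy : B ≤ ψ y) :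
    ¬ JoinedIn (Kᶜ ∩ {z | |φ z| ≤ A}) x y := by
  obtain ⟨a, a', ha, ha', hK⟩ := h
  intro hKc
  obtain ⟨z, hz, hz'⟩ := inter_nonempty_of_joinedIn φ.continuous ψ.continuous hinj hK hKc
    (fun z hz => ⟨ha.trans_le (abs_le.1 hz.2).1, (abs_le.1 hz.2).2.trans_lt ha'⟩)
    (fun z hz => ⟨hx.trans_lt hz.2.1, hz.2.2.trans_le hy⟩)
  exact hz'.1 hz.1

lemma Blocks.lt {K : Set V} {A r B : ℝ} (h : Blocks K φ ψ A r B) : r < B := by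
  obtain ⟨a, a', -, -, hK⟩ := h
  exact hK.source_mem.2.1.trans hK.source_mem.2.2

lemma mem_box_of_joinedIn_of_blocks {K : Set V} {A B r : ℝ}
    (hinj : Function.Injective fun z => (φ z, ψ z))
    (htop : Blocks K φ ψ A r B) (hbot : Blocks K φ (-ψ) A r B)
    (hright : Blocks K ψ φ B r A) (hleft : Blocks K ψ (-φ) B r A) {x y : V}
    (hφx : |φ x| ≤ r) (hψx : |ψ x| ≤ r) (hxy : JoinedIn Kᶜ x y) : |φ y| ≤ A ∧ |ψ y| ≤ B := by
  have hinj₂ : Function.Injective fun z => (φ z, (-ψ) z) := fun z w h =>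
    hinj (Prod.ext (Prod.ext_iff.1 h).1 (neg_injective (Prod.ext_iff.1 h).2))
  have hinj₃ : Function.Injective fun z => (ψ z, φ z) := Prod.swap_injective.comp hinj
  have hinj₄ : Function.Injective fun z => (ψ z, (-φ) z) := fun z w h =>
    hinj₃ (Prod.ext (Prod.ext_iff.1 h).1 (neg_injective (Prod.ext_iff.1 h).2))
  let N : V → ℝ := fun z => max (|φ z| - A) (|ψ z| - B)
  have hN (z : V) : N z ≤ 0 ↔ |φ z| ≤ A ∧ |ψ z| ≤ B := by simp [N]
  rw [← hN]
  by_contra! hy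
  obtain ⟨y', hy'0, hjoin⟩ := exists_joinedIn_first_hit hxy (N := N) (by fun_prop)
    ((hN x).2 ⟨hφx.trans hright.lt.le, hψx.trans htop.lt.le⟩) hy.le
  have hinφ : JoinedIn (Kᶜ ∩ {z | |φ z| ≤ A}) x y' :=
    hjoin.mono fun z hz => ⟨hz.1, ((hN z).1 hz.2).1⟩
  have hinψ : JoinedIn (Kᶜ ∩ {z | |ψ z| ≤ B}) x y' :=
    hjoin.mono fun z hz => ⟨hz.1, ((hN z).1 hz.2).2⟩
  rcases max_choice (|φ y'| - A) (|ψ y'| - B) with hmax | hmax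
  · rcases le_abs'.1 (sub_eq_zero.1 (hmax.symm.trans hy'0)).ge with h | h
    · exact hleft.not_joinedIn hinj₄ (by simpa using (abs_le'.1 hφx).2) (by simpa using le_neg.1 h)
        hinψ
    · exact hright.not_joinedIn hinj₃ (abs_le'.1 hφx).1 h hinψ
  · rcases le_abs'.1 (sub_eq_zero.1 (hmax.symm.trans hy'0)).ge with h | h
    · exact hbot.not_joinedIn hinj₂ (by simpa using (abs_le'.1 hψx).2) (by simpa using le_neg.1 h)
        hinφ
    · exact htop.not_joinedIn hinj (abs_le'.1 hψx).1 h hinφ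

lemma isBounded_box [FiniteDimensional ℝ V] (hinj : Function.Injective fun z => (φ z, ψ z))
    (A B : ℝ) : Bornology.IsBounded {z | |φ z| ≤ A ∧ |ψ z| ≤ B} := by
  obtain ⟨c, -, hc⟩ := (φ.prod ψ).toLinearMap.exists_antilipschitzWith (LinearMap.ker_eq_bot.2 hinj)
  refine (hc.isBounded_preimage (isBounded_closedBall (x := (0 : ℝ × ℝ)) (r := max A B))).subset ?_
  rintro z ⟨hφ, hψ⟩
  exact mem_closedBall_zero_iff.2 (max_le_max hφ hψ)

lemma exists_blocks_of_joinedIn {Λ : AddSubgroup V} {O : Set V}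
    (hO : ∀ z ∈ O, ∀ m ∈ Λ, z + m ∈ O) {a a' m : V} {A r B : ℝ}
    (h : JoinedIn (O ∩ {z | |ψ z| ≤ B}) a a') (ha : φ a < -A) (ha' : A < φ a')
    (hm : m ∈ Λ) (hφm : φ m = 0) (hψm : r + B < ψ m) :
    ∃ K, IsCompact K ∧ K ⊆ O ∧
      Blocks K φ ψ A r (ψ m + B + 1) ∧ Blocks K φ (-ψ) A r (ψ m + B + 1) := by
  obtain ⟨K, hK, hKO, hjoin⟩ := exists_compact_joinedIn h
  have htranslate (m' : V) : JoinedIn ((· + m') '' K) (a + m') (a' + m') :=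
    hjoin.map (continuous_add_const m')
  refine ⟨(· + m) '' K ∪ (· + -m) '' K,
    (hK.image (by fun_prop)).union (hK.image (by fun_prop)), ?_, ?_, ?_⟩
  · rintro _ (⟨z, hz, rfl⟩ | ⟨z, hz, rfl⟩)
    exacts [hO z (hKO hz).1 m hm, hO z (hKO hz).1 (-m) (neg_mem hm)]
  · refine ⟨a + m, a' + m, by simpa [hφm], by simpa [hφm], (htranslate m).mono ?_⟩
    rintro _ ⟨z, hz, rfl⟩
    obtain ⟨hzB, hzB'⟩ : -B ≤ ψ z ∧ ψ z ≤ B := abs_le.1 (hKO hz).2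
    exact ⟨Or.inl ⟨z, hz, rfl⟩, by simp only [map_add]; linarith, by simp only [map_add]; linarith⟩
  · refine ⟨a + -m, a' + -m, by simpa [hφm], by simpa [hφm], (htranslate (-m)).mono ?_⟩
    rintro _ ⟨z, hz, rfl⟩
    obtain ⟨hzB, hzB'⟩ : -B ≤ ψ z ∧ ψ z ≤ B := abs_le.1 (hKO hz).2
    refine ⟨Or.inr ⟨z, hz, rfl⟩, ?_, ?_⟩ <;>
      simp only [neg_apply, map_add, map_neg] <;> linarith

lemma exists_joinedIn_spanning {O : Set V} {Λ : AddSubgroup V}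
    (hO : ∀ z ∈ O, ∀ m ∈ Λ, z + m ∈ O) {u l : V} (hl : l ∈ Λ) (hψl : ψ l = 0) (hφl : 0 < φ l)
    (hjoin : JoinedIn O u (u + l)) :
    ∃ B, ∀ A, ∃ a a', φ a < -A ∧ A < φ a' ∧ JoinedIn (O ∩ {z | |ψ z| ≤ B}) a a' := by
  obtain ⟨B, hB⟩ := exists_bound_joinedIn hjoin ψ.continuous
  refine ⟨B, fun A => ?_⟩
  have hinv (z) (hz : z ∈ O ∩ {z | |ψ z| ≤ B}) (k : ℤ) : z + k • l ∈ O ∩ {z | |ψ z| ≤ B} :=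
    ⟨hO z hz.1 _ (zsmul_mem hl k), by simpa [hψl] using hz.2⟩
  obtain ⟨n, hn⟩ := exists_nat_gt ((|A| + |φ u|) / φ l)
  rw [div_lt_iff₀ hφl] at hn
  have hforward := joinedIn_add_nsmul hB (fun z hz => by simpa using hinv z hz 1) n
  have hbackward : JoinedIn (O ∩ {z | |ψ z| ≤ B}) (u + (-n : ℤ) • l) u := by
    simpa using joinedIn_add_right hforward fun z hz => hinv z hz (-n)
  refine ⟨_, _, ?_, ?_, hbackward.trans hforward⟩
  · have : φ (u + (-n : ℤ) • l) = φ u - n * φ l := by simp [sub_eq_add_neg]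
    linarith [le_abs_self A, le_abs_self (φ u)]
  · have : φ (u + n • l) = φ u + n * φ l := by simp
    linarith [le_abs_self A, neg_abs_le (φ u)]

lemma exists_joinedIn_spanning_of_unbounded {O : Set V} {Λ : AddSubgroup V}
    (hO : ∀ z ∈ O, ∀ m ∈ Λ, z + m ∈ O) {u l : V} (hl : l ∈ Λ) (hψl : 0 < ψ l)
    (hunb : ∀ X, ∃ y, JoinedIn O u y ∧ X < |ψ y|) (B : ℝ) :
    ∃ b b', ψ b < -B ∧ B < ψ b' ∧ JoinedIn O b b' := by
  obtain ⟨b, b', hbb', hlt⟩ : ∃ b b', JoinedIn O b b' ∧ 2 * B + ψ l < ψ b' - ψ b := by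
    obtain ⟨y, hy, hX⟩ := hunb (|ψ u| + (2 * B + ψ l))
    rcases lt_abs.1 hX with h | h
    · exact ⟨u, y, hy, by linarith [le_abs_self (ψ u)]⟩
    · exact ⟨y, u, hy.symm, by linarith [neg_abs_le (ψ u)]⟩
  obtain ⟨k, ⟨hk₁, hk₂⟩, -⟩ := existsUnique_add_zsmul_mem_Ico hψl (ψ b) (-B - ψ l)
  refine ⟨b + k • l, b' + k • l, ?_, ?_,
    joinedIn_add_right hbb' fun z hz => hO z hz _ (zsmul_mem hl k)⟩ <;>
  · simp only [map_add, map_zsmul]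
    linarith

theorem exists_compact_filling [FiniteDimensional ℝ V]
    (hinj : Function.Injective fun z => (φ z, ψ z)) {O : Set V} {Λ : AddSubgroup V}
    (hO : ∀ z ∈ O, ∀ m ∈ Λ, z + m ∈ O) {u l l' : V}
    (hl : l ∈ Λ) (hψl : ψ l = 0) (hφl : 0 < φ l) (hl' : l' ∈ Λ) (hφl' : φ l' = 0) (hψl' : 0 < ψ l')
    (hjoin : JoinedIn O u (u + l)) (hunb : ∀ X, ∃ y, JoinedIn O u y ∧ X < |ψ y|) (R : ℝ) :
    ∃ K, IsCompact K ∧ K ⊆ O ∧ closedBall 0 R ⊆ filling K := by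
  let r := max (‖φ‖ * R) (‖ψ‖ * R)
  obtain ⟨B₀, hhor⟩ := exists_joinedIn_spanning hO hl hψl hφl hjoin
  obtain ⟨i, hi⟩ := exists_nat_gt ((r + B₀) / ψ l')
  have hψi : r + B₀ < ψ (i • l') := by simpa [div_lt_iff₀ hψl'] using hi
  set B := ψ (i • l') + B₀ + 1
  obtain ⟨b, b', hb, hb', hver⟩ := exists_joinedIn_spanning_of_unbounded hO hl' hψl' hunb B
  obtain ⟨A₀, hver⟩ := exists_bound_joinedIn hver φ.continuous
  obtain ⟨j, hj⟩ := exists_nat_gt ((r + A₀) / φ l)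
  have hφj : r + A₀ < φ (j • l) := by simpa [div_lt_iff₀ hφl] using hj
  set A := φ (j • l) + A₀ + 1
  obtain ⟨a, a', ha, ha', hhor⟩ := hhor A
  obtain ⟨K₁, hK₁, hK₁O, htop, hbot⟩ := exists_blocks_of_joinedIn hO hhor ha ha'
    (nsmul_mem hl' i) (by simp [hφl']) hψi
  obtain ⟨K₂, hK₂, hK₂O, hright, hleft⟩ := exists_blocks_of_joinedIn hO hver hb hb'
    (nsmul_mem hl j) (by simp [hψl]) hφj
  refine ⟨K₁ ∪ K₂, hK₁.union hK₂, union_subset hK₁O hK₂O, fun x hx => ?_⟩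
  rw [mem_closedBall_zero_iff] at hx
  refine (isBounded_box hinj A B).subset fun y hxy => mem_box_of_joinedIn_of_blocks hinj
    (htop.mono subset_union_left) (hbot.mono subset_union_left)
    (hright.mono subset_union_right) (hleft.mono subset_union_right)
    ((φ.le_opNorm_of_le hx).trans (le_max_left _ _))
    ((ψ.le_opNorm_of_le hx).trans (le_max_right _ _)) hxy

end Enclosure

section ForwardOrbit

variable {X : Type*}

/-- The union of the forward images of `W`. -/
def forwardOrbit (F : X → X) (W : Set X) : Set X := ⋃ i, F^[i] '' W

lemma iterate_mem_forwardOrbit (F : X → X) {W : Set X} {z : X} (hz : z ∈ forwardOrbit F W)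
    (n : ℕ) : F^[n] z ∈ forwardOrbit F W := by
  obtain ⟨i, w, hw, rfl⟩ := mem_iUnion.1 hz
  exact mem_iUnion.2 ⟨n + i, w, hw, Function.iterate_add_apply F n i w⟩

lemma subset_forwardOrbit (F : X → X) (W : Set X) : W ⊆ forwardOrbit F W :=
  fun w hw => mem_iUnion.2 ⟨0, w, hw, rfl⟩

lemma isOpenMap_iterate [TopologicalSpace X] {F : X → X} (hF : IsOpenMap F) (n : ℕ) :
    IsOpenMap F^[n] := by
  induction n with
  | zero => exact IsOpenMap.id
  | succ n ih => exact ih.comp hF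

end ForwardOrbit

section MeanDisplacement

variable {V : Type*} [NormedAddCommGroup V]

lemma norm_iterate_sub_le {F : V → V} {M : ℝ} (hM : ∀ z, ‖F z - z‖ ≤ M) (n : ℕ) (z : V) :
    ‖F^[n] z - z‖ ≤ n * M := by
  induction n generalizing z with
  | zero => simp
  | succ n ih =>
    rw [Function.iterate_succ_apply, ← sub_add_sub_cancel _ (F z) z]
    push_cast
    linarith [norm_add_le (F^[n] (F z) - F z) (F z - z), ih (F z), hM z]

lemma exists_iterate_near_displacement (F : V ≃ₜ V) {M : ℝ} (hM : ∀ z, ‖F z - z‖ ≤ M)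
    {W K : Set V} (hW : IsOpen W) (hK : IsCompact K) (hKW : K ⊆ forwardOrbit F W) :
    ∃ c, ∀ n, ∀ z ∈ K, ∃ w ∈ W, ‖F^[n] z - (F^[n] w - w)‖ ≤ c := by
  obtain ⟨t, ht⟩ := hK.elim_finite_subcover _ (fun i => isOpenMap_iterate F.isOpenMap i W hW) hKW
  obtain ⟨R, hR⟩ := hK.isBounded.exists_norm_le
  refine ⟨2 * (t.sup id : ℕ) * M + R, fun n z hz => ?_⟩
  obtain ⟨i, hi, w, hw, rfl⟩ := mem_iUnion₂.1 (ht hz)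
  have hiM : i * M ≤ (t.sup id : ℕ) * M :=
    mul_le_mul_of_nonneg_right (by exact_mod_cast Finset.le_sup (f := id) hi)
      ((norm_nonneg _).trans (hM w))
  refine ⟨w, hw, ?_⟩
  have hsplit : F^[n] (F^[i] w) - (F^[n] w - w) =
      (F^[i] (F^[n] w) - F^[n] w) + (F^[i] w - (F^[i] w - w)) := by
    rw [(Function.Commute.iterate_iterate_self F n i).eq]
    abel
  calc ‖F^[n] (F^[i] w) - (F^[n] w - w)‖
      ≤ ‖F^[i] (F^[n] w) - F^[n] w‖ + (‖F^[i] w‖ + ‖F^[i] w - w‖) := by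
        rw [hsplit]
        exact (norm_add_le _ _).trans (add_le_add_right (norm_sub_le _ _) _)
    _ ≤ 2 * (t.sup id : ℕ) * M + R := by
        linarith [norm_iterate_sub_le hM i (F^[n] w), norm_iterate_sub_le hM i w, hR _ hz]

lemma image_iterate_filling_subset [ProperSpace V] (F : V ≃ₜ V) (K : Set V) (n : ℕ) :
    F^[n] '' filling K ⊆ filling (F^[n] '' K) := by
  induction n with
  | zero => simp
  | succ n ih =>
    rw [Function.iterate_succ', image_comp, image_comp]
    exact (image_mono ih).trans (image_filling_subset F _)

variable [NormedSpace ℝ V]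

lemma exists_displacement_near_convexHull [ProperSpace V] [Nontrivial V] (F : V ≃ₜ V) {M : ℝ}
    (hM : ∀ z, ‖F z - z‖ ≤ M) {W K : Set V} (hW : IsOpen W) (hK : IsCompact K)
    (hKW : K ⊆ forwardOrbit F W) {R : ℝ} (hRK : closedBall 0 R ⊆ filling K) :
    ∃ c, ∀ n, ∀ x ∈ closedBall 0 R,
      ∃ y ∈ convexHull ℝ ((fun z => F^[n] z - z) '' W), ‖F^[n] x - x - y‖ ≤ c := by
  obtain ⟨c, hc⟩ := exists_iterate_near_displacement F hM hW hK hKW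
  refine ⟨|c| + 1 + R, fun n x hx => ?_⟩
  have hsub : F^[n] '' K ⊆ cthickening |c| (convexHull ℝ ((fun z => F^[n] z - z) '' W)) := by
    rintro _ ⟨z, hz, rfl⟩
    obtain ⟨w, hw, hwc⟩ := hc n z hz
    exact mem_cthickening_of_dist_le _ _ _ _ (subset_convexHull ℝ _ (mem_image_of_mem _ hw))
      (dist_eq_norm (F^[n] z) _ ▸ hwc.trans (le_abs_self c))
  have hx' := filling_subset_of_convex hsub ((convex_convexHull ℝ _).cthickening _)
    isClosed_cthickening (image_iterate_filling_subset F K n ⟨x, hRK hx, rfl⟩)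
  obtain ⟨y, hy, hxy⟩ := mem_thickening_iff.1
    (cthickening_subset_thickening' (by positivity) (lt_add_one |c|) _ hx')
  refine ⟨y, hy, ?_⟩
  rw [dist_eq_norm] at hxy
  rw [sub_right_comm]
  exact (norm_sub_le _ _).trans (add_le_add hxy.le (mem_closedBall_zero_iff.1 hx))

/-- The mean displacement `φ_n(z) = (F^n(z) - z) / n`; it vanishes for `n = 0`. -/
def meanDisp (F : V → V) (n : ℕ) (z : V) : V := (n : ℝ)⁻¹ • (F^[n] z - z)

lemma smul_meanDisp (F : V → V) (n : ℕ) (z : V) : (n : ℝ) • meanDisp F n z = F^[n] z - z := by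
  rcases eq_or_ne n 0 with rfl | hn
  · simp
  · rw [meanDisp, smul_inv_smul₀ (Nat.cast_ne_zero.2 hn)]

lemma continuous_meanDisp {F : V → V} (hF : Continuous F) (n : ℕ) : Continuous (meanDisp F n) :=
  ((hF.iterate n).sub continuous_id).const_smul (n : ℝ)⁻¹

lemma norm_meanDisp_le {F : V → V} {M : ℝ} (hM : ∀ z, ‖F z - z‖ ≤ M) (n : ℕ) (z : V) :
    ‖meanDisp F n z‖ ≤ M := by
  rcases n.eq_zero_or_pos with rfl | hn
  · simpa [meanDisp] using (norm_nonneg _).trans (hM z)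
  · rw [meanDisp, norm_smul, norm_inv, RCLike.norm_natCast, inv_mul_le_iff₀ (by positivity)]
    exact norm_iterate_sub_le hM n z

lemma norm_meanDisp_add_sub_le {F : V → V} {M : ℝ} (hM : ∀ z, ‖F z - z‖ ≤ M) (a r : ℕ) (z : V) :
    ‖meanDisp F (a + r) z - meanDisp F a z‖ ≤ 2 * r * M / (a + r : ℕ) := by
  rcases (a + r).eq_zero_or_pos with h0 | hpos
  · obtain ⟨rfl, rfl⟩ : a = 0 ∧ r = 0 := by lia
    simp
  have hdiff : ((a + r : ℕ) : ℝ) • (meanDisp F (a + r) z - meanDisp F a z) =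
      (F^[r] (F^[a] z) - F^[a] z) - (r : ℝ) • meanDisp F a z := by
    rw [smul_sub, smul_meanDisp, Nat.cast_add, add_smul, smul_meanDisp, add_comm a r,
      Function.iterate_add_apply]
    abel
  rw [le_div_iff₀ (by positivity), mul_comm, ← RCLike.norm_natCast (K := ℝ), ← norm_smul, hdiff]
  calc ‖(F^[r] (F^[a] z) - F^[a] z) - (r : ℝ) • meanDisp F a z‖
      ≤ ‖F^[r] (F^[a] z) - F^[a] z‖ + r * ‖meanDisp F a z‖ := by
        simpa only [norm_smul, RCLike.norm_natCast] using
          norm_sub_le (F^[r] (F^[a] z) - F^[a] z) ((r : ℝ) • meanDisp F a z)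
    _ ≤ r * M + r * M := by
        gcongr
        exacts [norm_iterate_sub_le hM r _, norm_meanDisp_le hM a z]
    _ = 2 * r * M := by ring

lemma meanDisp_mul_eq_sum (F : V → V) (n k : ℕ) (z : V) :
    meanDisp F (n * k) z = ∑ j ∈ Finset.range k, (k : ℝ)⁻¹ • meanDisp F n (F^[n * j] z) := by
  have htel : F^[n * k] z - z = ∑ j ∈ Finset.range k, (F^[n * (j + 1)] z - F^[n * j] z) := by
    rw [Finset.sum_range_sub fun j => F^[n * j] z]
    simp
  simp_rw [meanDisp, htel, Finset.smul_sum, smul_smul, ← Function.iterate_add_apply,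
    Nat.cast_mul, mul_inv_rev, mul_add_one, add_comm n]

lemma meanDisp_mul_mem {F : V → V} {A : Set V} (hA : Convex ℝ A) {n : ℕ}
    (h : ∀ z, meanDisp F n z ∈ A) {k : ℕ} (hk : k ≠ 0) (z : V) : meanDisp F (n * k) z ∈ A := by
  rw [meanDisp_mul_eq_sum]
  exact hA.sum_mem (fun _ _ => by positivity) (by simp [hk]) fun j _ => h _

end MeanDisplacement

section RotationSets

variable {d : ℕ} {F : E d → E d} {W : Set (E d)}

lemma rotRel_mono_of_image_subset {W' : Set (E d)}
    (h : ∀ n, meanDisp F n '' W ⊆ meanDisp F n '' W') : rotRel F W ⊆ rotRel F W' := by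
  rintro ρ ⟨n, z, hn, hz, hlim⟩
  choose w hw hwz using fun i => h (n i) (mem_image_of_mem _ (hz i))
  exact ⟨n, w, hn, hw, hlim.congr fun i => (hwz i).symm⟩

lemma eventually_image_meanDisp_subset_thickening {M : ℝ} (hM : ∀ z, ‖F z - z‖ ≤ M) {ε : ℝ}
    (hε : 0 < ε) : ∀ᶠ n in atTop, meanDisp F n '' W ⊆ thickening ε (rotRel F W) := by
  by_contra hfreq
  obtain ⟨n, hn, hfar⟩ := extraction_of_frequently_atTop (not_eventually.1 hfreq)
  simp only [not_subset, exists_mem_image] at hfar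
  choose z hz hfar using hfar
  obtain ⟨ρ, -, k, hk, hlim⟩ := (isCompact_closedBall (0 : E d) M).tendsto_subseq
    fun i => mem_closedBall_zero_iff.2 (norm_meanDisp_le hM (n i) (z i))
  have hρ : ρ ∈ rotRel F W :=
    ⟨n ∘ k, z ∘ k, hn.tendsto_atTop.comp hk.tendsto_atTop, fun i => hz (k i), hlim⟩
  obtain ⟨i, hi⟩ := (hlim.eventually (ball_mem_nhds ρ hε)).exists
  exact hfar (k i) (mem_thickening_iff.2 ⟨ρ, hρ, hi⟩)

lemma exists_tendsto_meanDisp_mul {M : ℝ} (hM : ∀ z, ‖F z - z‖ ≤ M) {ρ : E d}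
    (hρ : ρ ∈ rotRel F W) {n : ℕ} (hn : 0 < n) :
    ∃ (k : ℕ → ℕ) (z : ℕ → E d), Tendsto k atTop atTop ∧ (∀ i, z i ∈ W) ∧
      Tendsto (fun i => meanDisp F (n * k i) (z i)) atTop (𝓝 ρ) := by
  obtain ⟨N, z, hN, hz, hlim⟩ := hρ
  refine ⟨fun i => N i / n, z, (Nat.tendsto_div_const_atTop hn.ne').comp hN, hz, ?_⟩
  have herr : Tendsto (fun i => meanDisp F (N i) (z i) - meanDisp F (n * (N i / n)) (z i))
      atTop (𝓝 0) := by
    refine squeeze_zero_norm (fun i => ?_)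
      ((tendsto_const_div_atTop_nhds_zero_nat (2 * n * M)).comp hN)
    have hM₀ : 0 ≤ M := (norm_nonneg _).trans (hM 0)
    calc ‖meanDisp F (N i) (z i) - meanDisp F (n * (N i / n)) (z i)‖
        ≤ 2 * (N i % n : ℕ) * M / N i := by
          simpa only [Nat.div_add_mod] using
            norm_meanDisp_add_sub_le hM (n * (N i / n)) (N i % n) (z i)
      _ ≤ 2 * n * M / N i := by
          gcongr
          exact (Nat.mod_lt _ hn).le
  have hlim' : Tendsto (fun i => meanDisp F (N i) (z i)) atTop (𝓝 ρ) := hlim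
  simpa using hlim'.sub herr

lemma rotRel_subset_of_meanDisp_mem {M : ℝ} (hM : ∀ z, ‖F z - z‖ ≤ M) {A : Set (E d)}
    (hA : Convex ℝ A) (hAc : IsClosed A) {n : ℕ} (hn : 0 < n) (h : ∀ z, meanDisp F n z ∈ A) :
    rotRel F W ⊆ A := by
  intro ρ hρ
  obtain ⟨k, z, hk, -, hlim⟩ := exists_tendsto_meanDisp_mul hM hρ hn
  exact hAc.mem_of_tendsto hlim ((hk.eventually_ne_atTop 0).mono fun i hi =>
    meanDisp_mul_mem hA h hi (z i))

lemma eventually_meanDisp_mem_cthickening_convexHull {c : ℝ}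
    (hc : ∀ n x, ∃ y ∈ convexHull ℝ ((fun z => F^[n] z - z) '' W), ‖F^[n] x - x - y‖ ≤ c)
    {ε : ℝ} (hε : 0 < ε) :
    ∀ᶠ n in atTop, ∀ x, meanDisp F n x ∈ cthickening ε (convexHull ℝ (meanDisp F n '' W)) := by
  filter_upwards [(tendsto_const_div_atTop_nhds_zero_nat c).eventually_le_const hε] with n hn x
  obtain ⟨y, hy, hxy⟩ := hc n x
  let scale : E d →ₗ[ℝ] E d := (n : ℝ)⁻¹ • LinearMap.id
  have hscale : (n : ℝ)⁻¹ • y ∈ convexHull ℝ (meanDisp F n '' W) := by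
    rw [show meanDisp F n '' W = scale '' ((fun z => F^[n] z - z) '' W) by rw [image_image]; rfl,
      ← scale.image_convexHull]
    exact ⟨y, hy, rfl⟩
  refine mem_cthickening_of_dist_le _ _ _ _ hscale (le_trans ?_ hn)
  rw [dist_eq_norm, meanDisp, ← smul_sub, norm_smul, norm_inv, RCLike.norm_natCast,
    ← div_eq_inv_mul]
  gcongr

lemma eventually_rotSet_subset_thickening_convexHull {M : ℝ} (hM : ∀ z, ‖F z - z‖ ≤ M) {c : ℝ}
    (hc : ∀ n x, ∃ y ∈ convexHull ℝ ((fun z => F^[n] z - z) '' W), ‖F^[n] x - x - y‖ ≤ c)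
    {ε : ℝ} (hε : 0 < ε) :
    ∀ᶠ n in atTop, rotSet F ⊆ thickening ε (convexHull ℝ (meanDisp F n '' W)) := by
  filter_upwards [eventually_meanDisp_mem_cthickening_convexHull hc (half_pos hε),
    eventually_gt_atTop 0] with n hmem hn
  exact (rotRel_subset_of_meanDisp_mem hM ((convex_convexHull ℝ _).cthickening _)
    isClosed_cthickening hn hmem).trans (cthickening_subset_thickening' hε (half_lt_self hε) _)

theorem rotSet_eq_rotRel_of_convex {M : ℝ} (hM : ∀ z, ‖F z - z‖ ≤ M)
    (hconv : Convex ℝ (rotRel F W)) (hclosed : IsClosed (rotRel F W)) {c : ℝ}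
    (hc : ∀ n x, ∃ y ∈ convexHull ℝ ((fun z => F^[n] z - z) '' W), ‖F^[n] x - x - y‖ ≤ c) :
    rotSet F = rotRel F W := by
  refine Subset.antisymm (fun ρ hρ => ?_)
    (rotRel_mono_of_image_subset fun n => image_mono (subset_univ W))
  rw [← hclosed.closure_eq, closure_eq_iInter_thickening, mem_iInter₂]
  intro ε hε
  obtain ⟨n, hhull, hnear⟩ :=
    ((eventually_rotSet_subset_thickening_convexHull hM hc (half_pos hε)).and
      (eventually_image_meanDisp_subset_thickening (W := W) hM (half_pos hε))).exists
  have hsub : convexHull ℝ (meanDisp F n '' W) ⊆ thickening (ε / 2) (rotRel F W) :=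
    convexHull_min hnear (hconv.thickening _)
  have := thickening_thickening_subset _ _ _ (thickening_subset_of_subset _ hsub (hhull hρ))
  rwa [add_halves] at this

end RotationSets

section Segment

lemma exists_mem_le_add_of_mem_thickening_convexHull {V : Type*} [NormedAddCommGroup V]
    [NormedSpace ℝ V] {Γ : Set V} {ψ : V →L[ℝ] ℝ} (hψ : ∀ x, |ψ x| ≤ ‖x‖) {ε : ℝ} {s : V}
    (hs : s ∈ thickening ε (convexHull ℝ Γ)) : ∃ x ∈ Γ, ψ x ≤ ψ s + ε := by
  by_contra! hlt
  obtain ⟨y, hy, hsy⟩ := mem_thickening_iff.1 hs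
  have hhull : ψ s + ε < ψ y :=
    convexHull_min hlt (convex_halfSpace_gt ψ.toLinearMap.isLinear _) hy
  have := (le_abs_self _).trans ((hψ (y - s)).trans_lt (by rwa [← dist_eq_norm, dist_comm])).le
  rw [map_sub] at this
  linarith

lemma exists_mem_abs_sub_le_of_mem_thickening_convexHull {V : Type*} [NormedAddCommGroup V]
    [NormedSpace ℝ V] {Γ : Set V} (hΓ : IsPreconnected Γ) {ψ : V →L[ℝ] ℝ} (hψ : ∀ x, |ψ x| ≤ ‖x‖)
    {ε : ℝ} (hε : 0 < ε) {s : V} (hs : s ∈ thickening ε (convexHull ℝ Γ)) :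
    ∃ x ∈ Γ, |ψ x - ψ s| ≤ ε := by
  obtain ⟨a, ha, has⟩ := exists_mem_le_add_of_mem_thickening_convexHull hψ hs
  obtain ⟨b, hb, hbs⟩ := exists_mem_le_add_of_mem_thickening_convexHull (ψ := -ψ)
    (fun x => by simpa using hψ x) hs
  rw [neg_apply, neg_apply] at hbs
  rcases lt_or_ge (ψ a) (ψ s) with has' | has'
  · rcases lt_or_ge (ψ s) (ψ b) with hbs' | hbs'
    · obtain ⟨x, hx, hxs⟩ := hΓ.intermediate_value ha hb ψ.continuous.continuousOn
        ⟨has'.le, hbs'.le⟩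
      exact ⟨x, hx, by simpa [hxs] using hε.le⟩
    · exact ⟨b, hb, abs_le.2 ⟨by linarith, by linarith⟩⟩
  · exact ⟨a, ha, abs_le.2 ⟨by linarith, by linarith⟩⟩

variable {V : Type*} [NormedAddCommGroup V] [InnerProductSpace ℝ V]

lemma exists_isometry_on_segment (p q : V) :
    ∃ ψ : V →L[ℝ] ℝ, (∀ x, |ψ x| ≤ ‖x‖) ∧
      ∀ x ∈ segment ℝ p q, ∀ y ∈ segment ℝ p q, |ψ x - ψ y| = ‖x - y‖ := by
  let e : V := ‖q - p‖⁻¹ • (q - p)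
  have he : ‖e‖ ≤ 1 := by
    simpa [e, norm_smul] using inv_mul_le_one (a := ‖q - p‖)
  have hein : |innerSL ℝ e (q - p)| = ‖q - p‖ := by
    rw [innerSL_apply_apply, real_inner_smul_left, real_inner_self_eq_norm_sq, sq, ← mul_assoc,
      inv_mul_mul_self, abs_norm]
  refine ⟨innerSL ℝ e, fun x => ?_, ?_⟩
  · simpa using (abs_real_inner_le_norm e x).trans (mul_le_of_le_one_left (norm_nonneg x) he)
  · rw [segment_eq_image']
    rintro _ ⟨s, -, rfl⟩ _ ⟨t, -, rfl⟩
    rw [← map_sub, add_sub_add_left_eq_sub, ← sub_smul, map_smul, norm_smul, smul_eq_mul, abs_mul,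
      Real.norm_eq_abs, hein]

theorem hausdorffDist_segment_le {p q : V} {Γ : Set V} (hΓ : IsPreconnected Γ) {ε : ℝ} (hε : 0 < ε)
    (hΓS : Γ ⊆ thickening ε (segment ℝ p q))
    (hSΓ : segment ℝ p q ⊆ thickening ε (convexHull ℝ Γ)) :
    hausdorffDist Γ (segment ℝ p q) ≤ 3 * ε := by
  obtain ⟨ψ, hψ, hiso⟩ := exists_isometry_on_segment p q
  refine hausdorffDist_le_of_mem_dist (by positivity) (fun x hx => ?_) fun s hs => ?_
  · obtain ⟨s, hs, hxs⟩ := mem_thickening_iff.1 (hΓS hx)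
    exact ⟨s, hs, by linarith⟩
  · obtain ⟨x, hx, hxs⟩ := exists_mem_abs_sub_le_of_mem_thickening_convexHull hΓ hψ hε (hSΓ hs)
    obtain ⟨s', hs', hxs'⟩ := mem_thickening_iff.1 (hΓS hx)
    refine ⟨x, hx, ?_⟩
    calc dist s x ≤ dist s s' + dist s' x := dist_triangle _ _ _
      _ = |ψ s - ψ s'| + dist x s' := by rw [hiso s hs s' hs', dist_eq_norm, dist_comm x]
      _ ≤ |ψ s - ψ x| + |ψ x - ψ s'| + dist x s' := by gcongr; exact abs_sub_le _ _ _
      _ ≤ ε + dist x s' + dist x s' := by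
        rw [abs_sub_comm, ← map_sub ψ x s', dist_eq_norm]
        gcongr
        exact hψ _
      _ ≤ 3 * ε := by linarith

end Segment

section Lattice

variable {d : ℕ}

lemma exists_mem_ZLat_norm_sub_le (d : ℕ) : ∃ r, ∀ z : E d, ∃ m ∈ ZLat d, ‖z - m‖ ≤ r := by
  refine ⟨√d, fun z => ⟨WithLp.toLp 2 fun i => (⌊z i⌋ : ℝ), fun i => ⟨⌊z i⌋, rfl⟩, ?_⟩⟩
  rw [EuclideanSpace.norm_eq]
  refine Real.sqrt_le_sqrt ?_
  calc ∑ i, ‖z i - ⌊z i⌋‖ ^ 2 ≤ ∑ _i : Fin d, (1 : ℝ) := by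
        refine Finset.sum_le_sum fun i _ => pow_le_one₀ (norm_nonneg _) ?_
        rw [Int.self_sub_floor, Real.norm_of_nonneg (Int.fract_nonneg _)]
        exact (Int.fract_lt_one _).le
    _ = d := by simp

/-- `F` commutes with the deck translations, that is, `F` is a lift of a map of the torus
homotopic to the identity. -/
def LatticeEquivariant (F : E d → E d) : Prop := ∀ z : E d, ∀ m ∈ ZLat d, F (z + m) = F z + m

namespace LatticeEquivariant

variable {F : E d → E d}

lemma iterate (hF : LatticeEquivariant F) (n : ℕ) : LatticeEquivariant F^[n] := by
  intro z m hm
  induction n generalizing z with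
  | zero => rfl
  | succ n ih => rw [Function.iterate_succ_apply, hF z m hm, ih, Function.iterate_succ_apply]

lemma add_sub_add (hF : LatticeEquivariant F) (z : E d) {m : E d} (hm : m ∈ ZLat d) :
    F (z + m) - (z + m) = F z - z := by
  rw [hF z m hm, add_sub_add_right_eq_sub]

lemma exists_norm_sub_le (hF : LatticeEquivariant F) (hcont : Continuous F) :
    ∃ M, ∀ z, ‖F z - z‖ ≤ M := by
  obtain ⟨r, hr⟩ := exists_mem_ZLat_norm_sub_le d
  obtain ⟨M, hM⟩ := (isCompact_closedBall (0 : E d) r).exists_bound_of_continuousOn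
    (hcont.sub continuous_id).continuousOn
  refine ⟨M, fun z => ?_⟩
  obtain ⟨m, hm, hzm⟩ := hr z
  rw [← sub_add_cancel z m, hF.add_sub_add _ hm]
  exact hM _ (mem_closedBall_zero_iff.2 hzm)

end LatticeEquivariant

end Lattice

section Torus

variable {d : ℕ}

lemma continuous_tpi : Continuous (tpi d) := continuous_quotient_mk'

lemma isOpenMap_tpi : IsOpenMap (tpi d) := QuotientAddGroup.isOpenMap_coe

lemma tpi_add_of_mem (z : E d) {m : E d} (hm : m ∈ ZLat d) : tpi d (z + m) = tpi d z :=
  QuotientAddGroup.mk_add_of_mem z hm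

lemma sub_mem_ZLat_of_tpi_eq {x y : E d} (h : tpi d x = tpi d y) : y - x ∈ ZLat d := by
  rw [sub_eq_neg_add]
  exact QuotientAddGroup.eq.1 h

lemma mem_preimage_image_tpi {C : Set (E d)} {z : E d} :
    z ∈ tpi d ⁻¹' (tpi d '' C) ↔ ∃ m ∈ ZLat d, z - m ∈ C := by
  refine ⟨fun ⟨c, hc, hcz⟩ => ⟨z - c, sub_mem_ZLat_of_tpi_eq hcz, by simpa using hc⟩,
    fun ⟨m, hm, hzm⟩ => ⟨z - m, hzm, ?_⟩⟩
  rw [← tpi_add_of_mem _ hm, sub_add_cancel]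

lemma image_meanDisp_preimage_image_tpi {F : E d → E d} (hF : LatticeEquivariant F)
    (C : Set (E d)) (n : ℕ) :
    meanDisp F n '' (tpi d ⁻¹' (tpi d '' C)) = meanDisp F n '' C := by
  refine Subset.antisymm ?_ (image_mono (subset_preimage_image _ C))
  rintro _ ⟨z, hz, rfl⟩
  obtain ⟨m, hm, hzm⟩ := mem_preimage_image_tpi.1 hz
  refine ⟨z - m, hzm, ?_⟩
  rw [meanDisp, meanDisp, ← (hF.iterate n).add_sub_add (z - m) hm, sub_add_cancel]

lemma isPreconnected_image_meanDisp_preimage_image_tpi {F : E d → E d}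
    (hF : LatticeEquivariant F) (hcont : Continuous F) {C : Set (E d)} (hC : IsPreconnected C)
    (n : ℕ) : IsPreconnected (meanDisp F n '' (tpi d ⁻¹' (tpi d '' C))) := by
  rw [image_meanDisp_preimage_image_tpi hF]
  exact hC.image _ (continuous_meanDisp hcont n).continuousOn

lemma rotU_image_tpi {F : E d → E d} (hF : LatticeEquivariant F) (C : Set (E d)) :
    rotU F (tpi d '' C) = rotRel F C :=
  Subset.antisymm
    (rotRel_mono_of_image_subset fun n => (image_meanDisp_preimage_image_tpi hF C n).subset)
    (rotRel_mono_of_image_subset fun n => (image_meanDisp_preimage_image_tpi hF C n).superset)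

lemma add_mem_connectedComponentIn_preimage_tpi {U : Set (T d)} {y z m : E d}
    (hy : y ∈ connectedComponentIn (tpi d ⁻¹' U) z) (hm : m ∈ ZLat d) :
    y + m ∈ connectedComponentIn (tpi d ⁻¹' U) (z + m) := by
  have hz := connectedComponentIn_nonempty_iff.1 ⟨y, hy⟩
  have hpre := (isPreconnected_connectedComponentIn (x := z) (F := tpi d ⁻¹' U)).image (· + m)
    (by fun_prop)
  refine hpre.subset_connectedComponentIn ⟨z, mem_connectedComponentIn hz, rfl⟩ ?_ ⟨y, hy, rfl⟩
  rintro _ ⟨x, hx, rfl⟩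
  rw [mem_preimage, tpi_add_of_mem x hm]
  exact connectedComponentIn_subset (tpi d ⁻¹' U) z hx

lemma exists_isPathConnected_image_tpi_eq {U : Set (T d)} (hUo : IsOpen U) (hUb : BoundedSet U)
    (hUc : IsConnected U) :
    ∃ C : Set (E d), IsPathConnected C ∧ Bornology.IsBounded C ∧ tpi d '' C = U := by
  have hPo : IsOpen (tpi d ⁻¹' U) := hUo.preimage continuous_tpi
  have hsurj : Function.Surjective (tpi d) := QuotientAddGroup.mk_surjective
  obtain ⟨z₀, hz₀⟩ := hUc.nonempty.preimage hsurj
  set C := connectedComponentIn (tpi d ⁻¹' U) z₀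
  have hz₀C : z₀ ∈ C := mem_connectedComponentIn hz₀
  have hCo : IsOpen C := hPo.connectedComponentIn
  have hCc : IsConnected C := isConnected_connectedComponentIn_iff.2 hz₀
  refine ⟨C, hCo.isConnected_iff_isPathConnected.1 hCc, hUb z₀ hz₀,
    (image_subset_iff.2 (connectedComponentIn_subset _ _)).antisymm ?_⟩
  refine hUc.isPreconnected.subset_of_closure_inter_subset (isOpenMap_tpi _ hCo)
    ⟨tpi d z₀, hz₀, z₀, hz₀C, rfl⟩ ?_
  rintro x ⟨hxC, hxU⟩
  obtain ⟨z, rfl⟩ := hsurj x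
  obtain ⟨_, ⟨y, hy, rfl⟩, c, hc, hcy⟩ := mem_closure_iff.1 hxC _
    (isOpenMap_tpi _ hPo.connectedComponentIn) ⟨z, mem_connectedComponentIn hxU, rfl⟩
  have hm : c - y ∈ ZLat d := sub_mem_ZLat_of_tpi_eq hcy.symm
  have hcz := add_mem_connectedComponentIn_preimage_tpi hy hm
  rw [add_sub_cancel] at hcz
  have hzU : z + (c - y) ∈ tpi d ⁻¹' U := by rwa [mem_preimage, tpi_add_of_mem z hm]
  have hzC : z + (c - y) ∈ C := by
    rw [show C = connectedComponentIn (tpi d ⁻¹' U) (z + (c - y)) from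
      (connectedComponentIn_eq hc).trans (connectedComponentIn_eq hcz).symm]
    exact mem_connectedComponentIn hzU
  exact ⟨_, hzC, tpi_add_of_mem z hm⟩

end Torus

section Recurrence

variable {d : ℕ} {F : E d → E d} {U : Set (T d)} {C : Set (E d)} {u : E d}

lemma LatticeEquivariant.add_mem_forwardOrbit (hF : LatticeEquivariant F) {z m : E d}
    (hz : z ∈ forwardOrbit F (tpi d ⁻¹' U)) (hm : m ∈ ZLat d) :
    z + m ∈ forwardOrbit F (tpi d ⁻¹' U) := by
  obtain ⟨n, w, hw, rfl⟩ := mem_iUnion.1 hz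
  refine mem_iUnion.2 ⟨n, w + m, ?_, hF.iterate n w m hm⟩
  rwa [mem_preimage, tpi_add_of_mem w hm]

lemma joinedIn_forwardOrbit_iterate (hcont : Continuous F) {W : Set (E d)} {x y : E d}
    (h : JoinedIn (forwardOrbit F W) x y) (n : ℕ) :
    JoinedIn (forwardOrbit F W) (F^[n] x) (F^[n] y) :=
  (h.map (hcont.iterate n)).mono (image_subset_iff.2 fun _ hz => iterate_mem_forwardOrbit F hz n)

/-- The time-`n` image of `u` can be joined to the lattice translate `u + m` inside the forward
orbit of `π⁻¹(U)`. This happens whenever the component of `π⁻¹(U)` around `u` meets its translate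
by `m` after time `n`; unlike those encounters, such pairs `(n, m)` can be added. -/
def ReturnsTo (F : E d → E d) (U : Set (T d)) (u : E d) (n : ℕ) (m : E d) : Prop :=
  m ∈ ZLat d ∧ JoinedIn (forwardOrbit F (tpi d ⁻¹' U)) (F^[n] u) (u + m)

namespace ReturnsTo

variable {n n' : ℕ} {m m' : E d}

lemma add (h : ReturnsTo F U u n m) (h' : ReturnsTo F U u n' m') (hF : LatticeEquivariant F)
    (hcont : Continuous F) : ReturnsTo F U u (n + n') (m + m') := by
  refine ⟨(ZLat d).add_mem h.1 h'.1, ?_⟩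
  have hfirst := joinedIn_forwardOrbit_iterate hcont h'.2 n
  rw [← Function.iterate_add_apply, hF.iterate n u m' h'.1] at hfirst
  have hsecond := joinedIn_add_right h.2 fun z hz => hF.add_mem_forwardOrbit hz h'.1
  rw [add_assoc] at hsecond
  exact hfirst.trans hsecond

lemma nsmul (h : ReturnsTo F U u n m) (hu : tpi d u ∈ U) (hF : LatticeEquivariant F)
    (hcont : Continuous F) (k : ℕ) : ReturnsTo F U u (n * k) (k • m) := by
  induction k with
  | zero => exact ⟨by simp, by simpa using JoinedIn.refl (subset_forwardOrbit F _ hu)⟩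
  | succ k ih => rw [mul_add_one, succ_nsmul]; exact ih.add h hF hcont

lemma joinedIn_add_sub (h : ReturnsTo F U u n m) (h' : ReturnsTo F U u n m')
    (hF : LatticeEquivariant F) :
    JoinedIn (forwardOrbit F (tpi d ⁻¹' U)) u (u + (m' - m)) := by
  have := joinedIn_add_right (h.2.symm.trans h'.2)
    fun z hz => hF.add_mem_forwardOrbit hz (neg_mem h.1)
  rwa [add_neg_cancel_right, add_assoc, ← sub_eq_add_neg] at this

end ReturnsTo

lemma joinedIn_forwardOrbit_of_isPathConnected (hC : IsPathConnected C)
    (hCU : C ⊆ tpi d ⁻¹' U) {x y : E d} (hx : x ∈ C) (hy : y ∈ C) :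
    JoinedIn (forwardOrbit F (tpi d ⁻¹' U)) x y :=
  (hC.joinedIn x hx y hy).mono (hCU.trans (subset_forwardOrbit F _))

lemma returnsTo_of_iterate_sub_mem (hF : LatticeEquivariant F) (hcont : Continuous F)
    (hC : IsPathConnected C) (hCU : C ⊆ tpi d ⁻¹' U) (hu : u ∈ C) {n : ℕ} {x m : E d}
    (hm : m ∈ ZLat d) (hx : x ∈ C) (hxm : F^[n] x - m ∈ C) : ReturnsTo F U u n m := by
  refine ⟨hm, ?_⟩
  have hfirst := joinedIn_forwardOrbit_iterate hcont
    (joinedIn_forwardOrbit_of_isPathConnected (F := F) hC hCU hu hx) n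
  have hsecond := joinedIn_add_right
    (joinedIn_forwardOrbit_of_isPathConnected (F := F) hC hCU hxm hu)
    fun z hz => hF.add_mem_forwardOrbit hz hm
  rw [sub_add_cancel] at hsecond
  exact hfirst.trans hsecond

lemma frequently_iterate_sub_mem {F : E d ≃ₜ E d} {f : T d ≃ₜ T d} (hlift : IsLift F f)
    (hrec : Recurrent f (tpi d '' C)) :
    ∃ᶠ n in atTop, ∃ m ∈ ZLat d, ∃ x ∈ C, F^[n] x - m ∈ C := by
  refine Nat.frequently_atTop_iff_infinite.2 (hrec.mono ?_)
  rintro n ⟨-, _, ⟨_, ⟨x, hx, rfl⟩, rfl⟩, hret⟩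
  have hsemi : Function.Semiconj (tpi d) F f := hlift.1
  rw [← (hsemi.iterate_right n).eq] at hret
  obtain ⟨m, hm, hxm⟩ := mem_preimage_image_tpi.1 hret
  exact ⟨m, hm, x, hx, hxm⟩

lemma mem_rotRel_of_frequently (hC : Bornology.IsBounded C) {v : E d}
    (h : ∃ᶠ n : ℕ in atTop, ∃ x ∈ C, F^[n] x - (n : ℝ) • v ∈ C) : v ∈ rotRel F C := by
  obtain ⟨r, hr⟩ := hC.exists_norm_le
  obtain ⟨n, hn, hret⟩ := extraction_of_frequently_atTop h
  choose x hx hxv using hret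
  refine ⟨n, x, hn.tendsto_atTop, hx, tendsto_iff_norm_sub_tendsto_zero.2 ?_⟩
  refine squeeze_zero' (.of_forall fun i => norm_nonneg _) ?_
    ((tendsto_const_div_atTop_nhds_zero_nat (r + r)).comp hn.tendsto_atTop)
  filter_upwards [hn.tendsto_atTop.eventually_gt_atTop 0] with i hi
  have hsplit : (n i : ℝ)⁻¹ • (F^[n i] (x i) - x i) - v =
      (n i : ℝ)⁻¹ • (F^[n i] (x i) - (n i : ℝ) • v - x i) := by
    match_scalars <;> field_simp
  rw [hsplit, norm_smul, norm_inv, Real.norm_natCast, ← div_eq_inv_mul]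
  exact div_le_div_of_nonneg_right (norm_sub_le_of_le (hr _ (hxv i)) (hr _ (hx i)))
    (Nat.cast_nonneg _)

lemma exists_returnsTo_joinedIn_add (hF : LatticeEquivariant F) (hcont : Continuous F)
    (hC : IsPathConnected C) (hCb : Bornology.IsBounded C) (hCU : C ⊆ tpi d ⁻¹' U) (hu : u ∈ C)
    (hrec : ∃ᶠ n in atTop, ∃ m ∈ ZLat d, ∃ x ∈ C, F^[n] x - m ∈ C)
    (hrat : ∀ m ∈ ZLat d, ∀ n : ℕ, (n : ℝ)⁻¹ • m ∉ rotRel F C) :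
    ∃ n > 0, ∃ m, ReturnsTo F U u n m ∧ ∃ l ∈ ZLat d, l ≠ 0 ∧
      JoinedIn (forwardOrbit F (tpi d ⁻¹' U)) u (u + l) := by
  have hret : ∀ {n : ℕ} {m x : E d}, m ∈ ZLat d → x ∈ C → F^[n] x - m ∈ C →
      ReturnsTo F U u n m := returnsTo_of_iterate_sub_mem hF hcont hC hCU hu
  obtain ⟨n, ⟨m, hm, x, hx, hxm⟩, hn⟩ := (hrec.and_eventually (eventually_gt_atTop 0)).exists
  refine ⟨n, hn, m, hret hm hx hxm, ?_⟩
  obtain ⟨n', m', hm', ⟨x', hx', hxm'⟩, hne⟩ : ∃ (n' : ℕ), ∃ m' ∈ ZLat d,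
      (∃ x ∈ C, F^[n'] x - m' ∈ C) ∧ n • m' ≠ n' • m := by
    by_contra! hpar
    refine hrat m hm n (mem_rotRel_of_frequently hCb (hrec.mono ?_))
    rintro n' ⟨m', hm', hx'⟩
    have hm'eq : (n' : ℝ) • (n : ℝ)⁻¹ • m = m' := by
      rw [smul_comm, Nat.cast_smul_eq_nsmul, ← hpar n' m' hm' hx', ← Nat.cast_smul_eq_nsmul ℝ,
        inv_smul_smul₀ (Nat.cast_ne_zero.2 hn.ne')]
    rwa [hm'eq]
  have h₁ := (hret hm hx hxm).nsmul (hCU hu) hF hcont n'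
  have h₂ := (hret hm' hx' hxm').nsmul (hCU hu) hF hcont n
  rw [mul_comm] at h₂
  exact ⟨n • m' - n' • m, sub_mem h₂.1 h₁.1, sub_ne_zero.2 hne, h₁.joinedIn_add_sub h₂ hF⟩

lemma ReturnsTo.apply_eq_of_bounded (hF : LatticeEquivariant F) (hcont : Continuous F)
    {M : ℝ} (hM : ∀ z, ‖F z - z‖ ≤ M) (hC : IsPathConnected C) (hCU : C ⊆ tpi d ⁻¹' U)
    (hu : u ∈ C) {n : ℕ} {m : E d} (hn : 0 < n) (hret : ReturnsTo F U u n m)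
    {ψ : E d →L[ℝ] ℝ} {X : ℝ}
    (hX : ∀ y, JoinedIn (forwardOrbit F (tpi d ⁻¹' U)) u y → |ψ y| ≤ X)
    {ρ : E d} (hρ : ρ ∈ rotRel F C) : ψ ρ = ψ ((n : ℝ)⁻¹ • m) := by
  obtain ⟨k, z, hk, hz, hlim⟩ := exists_tendsto_meanDisp_mul hM hρ hn
  have hdrift : ∀ i, |ψ (F^[n * k i] (z i) - k i • m)| ≤ X := fun i => by
    have hretk := hret.nsmul (hCU hu) hF hcont (k i)
    have hjoin := hretk.2.symm.trans (joinedIn_forwardOrbit_iterate hcont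
      (joinedIn_forwardOrbit_of_isPathConnected hC hCU hu (hz i)) (n * k i))
    have := joinedIn_add_right hjoin fun z hz => hF.add_mem_forwardOrbit hz (neg_mem hretk.1)
    rw [add_neg_cancel_right, ← sub_eq_add_neg] at this
    exact hX _ this
  refine tendsto_nhds_unique ((ψ.continuous.tendsto ρ).comp hlim)
    (tendsto_iff_norm_sub_tendsto_zero.2 ?_)
  refine squeeze_zero' (.of_forall fun i => norm_nonneg _) ?_
    ((tendsto_const_div_atTop_nhds_zero_nat (X + X)).comp (hk.const_mul_atTop' hn))
  filter_upwards [hk.eventually_gt_atTop 0] with i hi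
  have hsplit : meanDisp F (n * k i) (z i) - (n : ℝ)⁻¹ • m =
      ((n * k i : ℕ) : ℝ)⁻¹ • (F^[n * k i] (z i) - k i • m - z i) := by
    rw [meanDisp, ← Nat.cast_smul_eq_nsmul ℝ, Nat.cast_mul]
    match_scalars <;> field_simp
  rw [Function.comp_apply, ← map_sub, hsplit, map_smul, norm_smul, norm_inv, Real.norm_natCast,
    ← div_eq_inv_mul, map_sub]
  exact div_le_div_of_nonneg_right (norm_sub_le_of_le (hdrift i)
    (hX _ (joinedIn_forwardOrbit_of_isPathConnected hC hCU hu (hz i)))) (Nat.cast_nonneg _)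

end Recurrence

section Plane

/-- The quarter turn of `l`; with `l` it forms an orthogonal frame of `ℝ²`, integral if `l` is. -/
def perp (l : E 2) : E 2 := !₂[-l 1, l 0]

lemma perp_mem_ZLat {l : E 2} (hl : l ∈ ZLat 2) : perp l ∈ ZLat 2 :=
  Fin.forall_fin_two.2 ⟨(ZLat 2).neg_mem hl 1, hl 0⟩

lemma inner_eq_mul_add_mul (x y : E 2) : inner ℝ x y = x 0 * y 0 + x 1 * y 1 := by
  simp [PiLp.inner_apply, Fin.sum_univ_two, mul_comm]

lemma inner_perp_self (l : E 2) : inner ℝ (perp l) l = 0 := by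
  simp [inner_eq_mul_add_mul, perp]
  ring

lemma perp_ne_zero {l : E 2} (hl : l ≠ 0) : perp l ≠ 0 := by
  contrapose! hl
  ext i
  fin_cases i
  · simpa [perp] using congrArg (· 1) hl
  · simpa [perp] using congrArg (· 0) hl

lemma inner_smul_add_inner_perp_smul (l z : E 2) :
    inner ℝ l z • l + inner ℝ (perp l) z • perp l = ‖l‖ ^ 2 • z := by
  rw [EuclideanSpace.real_norm_sq_eq, Fin.sum_univ_two]
  ext i
  fin_cases i <;> simp [inner_eq_mul_add_mul, perp] <;> ring

lemma injective_inner_inner_perp {l : E 2} (hl : l ≠ 0) :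
    Function.Injective fun z => (innerSL ℝ l z, innerSL ℝ (perp l) z) := by
  intro x y hxy
  obtain ⟨h₁, h₂⟩ := Prod.mk.inj hxy
  rw [innerSL_apply_apply, innerSL_apply_apply] at h₁ h₂
  have hl' : ‖l‖ ^ 2 ≠ 0 := by simpa using hl
  apply smul_right_injective _ hl'
  simp only [← inner_smul_add_inner_perp_smul, h₁, h₂]

lemma mem_affineSpan_pair_of_inner_perp_eq {l p q v : E 2} (hl : l ≠ 0) (hpq : p ≠ q)
    (hp : inner ℝ (perp l) p = inner ℝ (perp l) v) (hq : inner ℝ (perp l) q = inner ℝ (perp l) v) :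
    v ∈ line[ℝ, p, q] := by
  have hl' : ‖l‖ ^ 2 ≠ 0 := by simpa using hl
  have hpar : ∀ w, inner ℝ (perp l) w = 0 → inner ℝ l w • l = ‖l‖ ^ 2 • w := fun w hw => by
    simpa [hw] using inner_smul_add_inner_perp_smul l w
  have hv := hpar (v - p) (by rw [inner_sub_right, hp, sub_self])
  have hqp := hpar (q - p) (by rw [inner_sub_right, hp, hq, sub_self])
  have hs : inner ℝ l (q - p) ≠ 0 := by
    intro h
    rw [h, zero_smul, eq_comm, smul_eq_zero_iff_right hl', sub_eq_zero] at hqp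
    exact hpq hqp.symm
  convert AffineMap.lineMap_mem_affineSpan_pair (inner ℝ l (v - p) / inner ℝ l (q - p)) p q
  rw [AffineMap.lineMap_apply, vsub_eq_sub, vadd_eq_add, ← sub_eq_iff_eq_add]
  apply smul_right_injective _ hl'
  simp only
  rw [← hv, smul_comm, ← hqp, smul_smul, div_mul_cancel₀ _ hs]

lemma ratVec_inv_smul_of_mem_ZLat {m : E 2} (hm : m ∈ ZLat 2) (n : ℕ) :
    RatVec ((n : ℝ)⁻¹ • m) := by
  have hcoord : ∀ i, ∃ r : ℚ, ((n : ℝ)⁻¹ • m) i = r := fun i => by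
    obtain ⟨a, ha⟩ := hm i
    exact ⟨(n : ℚ)⁻¹ * a, by simp [ha]⟩
  exact ⟨hcoord 0, hcoord 1⟩

end Plane

section Conclusion

lemma exists_compact_filling_of_rotRel_eq_segment {F : E 2 ≃ₜ E 2} {C : Set (E 2)} {p q : E 2}
    {f : T 2 ≃ₜ T 2} (hlift : IsLift F f) (hC : IsPathConnected C) (hCb : Bornology.IsBounded C)
    (hrec : Recurrent f (tpi 2 '' C)) (hpq : p ≠ q)
    (hrat : ∀ z ∈ line[ℝ, p, q], ¬ RatVec z) (hrot : rotRel F C = segment ℝ p q) (R : ℝ) :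
    ∃ K, IsCompact K ∧ K ⊆ forwardOrbit F (tpi 2 ⁻¹' (tpi 2 '' C)) ∧
      closedBall 0 R ⊆ filling K := by
  have hF : LatticeEquivariant F := hlift.2
  have hCU : C ⊆ tpi 2 ⁻¹' (tpi 2 '' C) := subset_preimage_image _ _
  obtain ⟨M, hM⟩ := hF.exists_norm_sub_le F.continuous
  obtain ⟨u, hu⟩ := hC.nonempty
  have hseg : segment ℝ p q ⊆ line[ℝ, p, q] :=
    convexHull_pair (𝕜 := ℝ) p q ▸ convexHull_subset_affineSpan _
  obtain ⟨n, hn, m, hret, l, hl, hl₀, hjoin⟩ := exists_returnsTo_joinedIn_add hF F.continuous hC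
    hCb hCU hu (frequently_iterate_sub_mem hlift hrec)
    fun m hm n hmem => hrat _ (hseg (hrot ▸ hmem)) (ratVec_inv_smul_of_mem_ZLat hm n)
  have hunb : ∀ X, ∃ y, JoinedIn (forwardOrbit F (tpi 2 ⁻¹' (tpi 2 '' C))) u y ∧
      X < |innerSL ℝ (perp l) y| := by
    by_contra! hbdd
    obtain ⟨X, hX⟩ := hbdd
    have hlevel : ∀ ρ ∈ segment ℝ p q,
        inner ℝ (perp l) ρ = inner ℝ (perp l) ((n : ℝ)⁻¹ • m) := fun ρ hρ =>
      hret.apply_eq_of_bounded hF F.continuous hM hC hCU hu hn hX (hrot ▸ hρ)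
    exact hrat _ (mem_affineSpan_pair_of_inner_perp_eq hl₀ hpq (hlevel p (left_mem_segment ℝ p q))
      (hlevel q (right_mem_segment ℝ p q))) (ratVec_inv_smul_of_mem_ZLat hret.1 n)
  exact exists_compact_filling (injective_inner_inner_perp hl₀)
    (fun z hz m hm => hF.add_mem_forwardOrbit hz hm) hl (inner_perp_self l)
    (real_inner_self_pos.2 hl₀) (perp_mem_ZLat hl)
    ((real_inner_comm _ _).trans (inner_perp_self l)) (real_inner_self_pos.2 (perp_ne_zero hl₀))
    hjoin hunb R

variable {d : ℕ}

lemma exists_displacement_near_convexHull_of_forall_filling [NeZero d]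
    {F : E d ≃ₜ E d} (hF : LatticeEquivariant F) {W : Set (E d)} (hW : IsOpen W)
    (hfill : ∀ R, ∃ K, IsCompact K ∧ K ⊆ forwardOrbit F W ∧ closedBall 0 R ⊆ filling K) :
    ∃ c, ∀ n x, ∃ y ∈ convexHull ℝ ((fun z => F^[n] z - z) '' W), ‖F^[n] x - x - y‖ ≤ c := by
  obtain ⟨M, hM⟩ := hF.exists_norm_sub_le F.continuous
  obtain ⟨r, hr⟩ := exists_mem_ZLat_norm_sub_le d
  obtain ⟨K, hK, hKW, hrK⟩ := hfill r
  obtain ⟨c, hc⟩ := exists_displacement_near_convexHull F hM hW hK hKW hrK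
  refine ⟨c, fun n x => ?_⟩
  obtain ⟨m, hm, hxm⟩ := hr x
  rw [← sub_add_cancel x m, (hF.iterate n).add_sub_add _ hm]
  exact hc n _ (mem_closedBall_zero_iff.2 hxm)

lemma tendsto_hausdorffDist_image_meanDisp {F : E d → E d} {M : ℝ}
    (hM : ∀ z, ‖F z - z‖ ≤ M) {W : Set (E d)} (hconn : ∀ n, IsPreconnected (meanDisp F n '' W))
    {p q : E d} (hrot : rotRel F W = segment ℝ p q) {c : ℝ}
    (hc : ∀ n x, ∃ y ∈ convexHull ℝ ((fun z => F^[n] z - z) '' W), ‖F^[n] x - x - y‖ ≤ c) :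
    Tendsto (fun n => hausdorffDist (meanDisp F n '' W) (segment ℝ p q)) atTop (𝓝 0) := by
  have hrotSet : segment ℝ p q ⊆ rotSet F :=
    hrot ▸ rotRel_mono_of_image_subset fun n => image_mono (subset_univ W)
  refine Metric.tendsto_nhds.2 fun ε hε => ?_
  have hε' : 0 < ε / 4 := by positivity
  filter_upwards [eventually_image_meanDisp_subset_thickening (W := W) hM hε',
    eventually_rotSet_subset_thickening_convexHull hM hc hε'] with n hnear hhull
  rw [hrot] at hnear
  rw [Real.dist_0_eq_abs, abs_of_nonneg hausdorffDist_nonneg]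
  linarith [hausdorffDist_segment_le (hconn n) hε' hnear (hrotSet.trans hhull)]

end Conclusion

/-- **Theorem (semilocal rotation sets, part (b)).**
If `U ⊆ T²` is open, bounded, connected and recurrent and `ρ_U(F) = S` is a line
segment of positive length whose affine span contains no rational vectors, then
`ρ(F) = S` and `φ_n(U) → S` in Hausdorff distance. -/
theorem semilocal_rotation_sets_irrational_segment
    (F : E 2 ≃ₜ E 2) (f : T 2 ≃ₜ T 2) (hlift : IsLift F f)
    (U : Set (T 2)) (hUopen : IsOpen U) (hUbdd : BoundedSet U)
    (hUconn : IsConnected U) (hUrec : Recurrent f U)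
    (S : Set (E 2)) (p q : E 2) (hpq : p ≠ q) (hSseg : S = segment ℝ p q)
    (hnorat : ∀ z ∈ (affineSpan ℝ S : Set (E 2)), ¬ RatVec z)
    (hrot : rotU (⇑F) U = S) :
    rotSet (⇑F) = S ∧
      Tendsto
        (fun n : ℕ =>
          Metric.hausdorffDist ((fun z => (n : ℝ)⁻¹ • ((⇑F)^[n] z - z)) '' (tpi 2 ⁻¹' U)) S)
        atTop (𝓝 0) := by
  subst hSseg
  rw [rotU] at hrot
  obtain ⟨C, hC, hCb, rfl⟩ := exists_isPathConnected_image_tpi_eq hUopen hUbdd hUconn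
  have hF : LatticeEquivariant F := hlift.2
  have hline : line[ℝ, p, q] ≤ affineSpan ℝ (segment ℝ p q) := affineSpan_mono ℝ <|
    pair_subset (left_mem_segment ℝ p q) (right_mem_segment ℝ p q)
  have hfill := exists_compact_filling_of_rotRel_eq_segment hlift hC hCb hUrec hpq
    (fun z hz => hnorat z (hline hz)) ((rotU_image_tpi hF C).symm.trans hrot)
  obtain ⟨M, hM⟩ := hF.exists_norm_sub_le F.continuous
  obtain ⟨c, hc⟩ := exists_displacement_near_convexHull_of_forall_filling hF
    (hUopen.preimage continuous_tpi) hfill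
  have hconn := isPreconnected_image_meanDisp_preimage_image_tpi hF F.continuous
    hC.isConnected.isPreconnected
  have hclosed : IsClosed (segment ℝ p q) :=
    convexHull_pair (𝕜 := ℝ) p q ▸ (toFinite {p, q}).isClosed_convexHull ℝ
  refine ⟨?_, tendsto_hausdorffDist_image_meanDisp hM hconn hrot hc⟩
  rw [← hrot] at hclosed ⊢
  exact rotSet_eq_rotRel_of_convex hM (hrot ▸ convex_segment p q) hclosed hc
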